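/- arXiv:math-ph/0202021 — 2 statements merged into one kernel-verified Lean document; each statement's English description precedes it below -/
import Mathlib

section
/- Diagonal coherent-state matrix elements of an operator commuting with the free Hamiltonian are Gaussian averages of its on-shell symbol: let S : ℝ → ℂ be bounded and measurable, and let A be the Fourier multiplier operator on L²(ℝ,ℂ) with symbol S, i.e. 𝓕(Aψ)(E) = S(E) · (𝓕ψ)(E) for a.e. E. Then for all t, e ∈ ℝ and ε > 0, ⟪ψ_{t,e,ε}, A ψ_{t,e,ε}⟫ = (√π ε)^{−1} ∫_ℝ S(E) e^{−(E−e)²/ε²} dE. -/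
open MeasureTheory Complex

/-- The time-energy coherent state `ψ_{t,e,ε}(x) = (ε²/π)^{1/4} e^{ite/2} e^{iex}
e^{-ε²(x+t)²/2}`. -/
noncomputable def coherentState (t e ε : ℝ) : ℝ → ℂ := fun x =>
  (((ε ^ 2 / Real.pi) ^ ((1 : ℝ) / 4) : ℝ) : ℂ) *
    Complex.exp (Complex.I * (t : ℂ) * (e : ℂ) / 2) *
    Complex.exp (Complex.I * (e : ℂ) * (x : ℂ)) *
    Complex.exp (-((ε : ℂ) ^ 2 * ((x : ℂ) + (t : ℂ)) ^ 2 / 2))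

/-- The Fourier transform `(𝓕ψ)(E) = (2π)^{-1/2} ∫ e^{-iEx} ψ(x) dx`. -/
noncomputable def fourierTransform (ψ : ℝ → ℂ) (E : ℝ) : ℂ :=
  (((Real.sqrt (2 * Real.pi))⁻¹ : ℝ) : ℂ) *
    ∫ x : ℝ, Complex.exp (-(Complex.I * (E : ℂ) * (x : ℂ))) * ψ x

/-- The inverse Fourier transform `(𝓕⁻¹g)(x) = (2π)^{-1/2} ∫ e^{iEx} g(E) dE`. -/
noncomputable def inverseFourierTransform (g : ℝ → ℂ) (x : ℝ) : ℂ :=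
  (((Real.sqrt (2 * Real.pi))⁻¹ : ℝ) : ℂ) *
    ∫ E : ℝ, Complex.exp (Complex.I * (E : ℂ) * (x : ℂ)) * g E


lemma cs_quad (t e ε E x : ℝ) :
    Complex.exp (-(Complex.I * (E : ℂ) * (x : ℂ))) * coherentState t e ε x =
    (((ε ^ 2 / Real.pi) ^ ((1 : ℝ) / 4) : ℝ) : ℂ) *
      Complex.exp ((-((ε ^ 2 / 2 : ℝ) : ℂ)) * (x : ℂ) ^ 2 + (I * (e - E) - ε ^ 2 * t) * x +
        (I * t * e / 2 - ε ^ 2 * t ^ 2 / 2)) := by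
  unfold coherentState
  rw [mul_assoc _ (cexp _) (cexp _), ← Complex.exp_add, mul_assoc _ (cexp _) (cexp _),
    ← Complex.exp_add, mul_left_comm, ← Complex.exp_add]
  congr 2
  push_cast
  ring

lemma cs_fourier (t e ε : ℝ) (hε : 0 < ε) (E : ℝ) :
    fourierTransform (coherentState t e ε) E =
      (((Real.sqrt (2 * Real.pi))⁻¹ * ((ε ^ 2 / Real.pi) ^ ((1 : ℝ) / 4) *
        Real.sqrt (Real.pi / (ε ^ 2 / 2))) * Real.exp (-((E - e) ^ 2 / (2 * ε ^ 2))) : ℝ) : ℂ) *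
      Complex.exp (((t * e / 2 - (e - E) * t : ℝ) : ℂ) * I) := by
  have hε' : (ε : ℂ) ≠ 0 := by exact_mod_cast hε.ne'
  unfold fourierTransform
  simp_rw [cs_quad]
  rw [integral_const_mul, integral_cexp_quadratic (by
    rw [← ofReal_neg, ofReal_re]; have := pow_pos hε 2; linarith)]
  have h1 : ((Real.pi : ℂ) / -(-((ε ^ 2 / 2 : ℝ) : ℂ))) ^ (1 / 2 : ℂ)
      = ((Real.sqrt (Real.pi / (ε ^ 2 / 2)) : ℝ) : ℂ) := by
    rw [Real.sqrt_eq_rpow, ofReal_cpow (by positivity)]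
    push_cast
    rw [neg_neg]
  rw [h1]
  have h2 : (I * t * e / 2 - ε ^ 2 * t ^ 2 / 2 : ℂ) -
      (I * (e - E) - ε ^ 2 * t) ^ 2 / (4 * (-((ε ^ 2 / 2 : ℝ) : ℂ))) =
      ((-((E - e) ^ 2 / (2 * ε ^ 2)) : ℝ) : ℂ) + ((t * e / 2 - (e - E) * t : ℝ) : ℂ) * I := by
    push_cast
    field_simp
    ring_nf
    simp only [I_sq]
    ring
  rw [h2, Complex.exp_add]
  push_cast
  ring

lemma cs_const (ε : ℝ) (hε : 0 < ε) :
    ((Real.sqrt (2 * Real.pi))⁻¹ * ((ε ^ 2 / Real.pi) ^ ((1 : ℝ) / 4) *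
        Real.sqrt (Real.pi / (ε ^ 2 / 2)))) ^ 2 = (Real.sqrt Real.pi * ε)⁻¹ := by
  have hpi := Real.pi_pos
  have h1 : ((ε ^ 2 / Real.pi) ^ ((1 : ℝ) / 4)) ^ 2 = ε / Real.sqrt Real.pi := by
    rw [← Real.rpow_natCast, ← Real.rpow_mul (by positivity)]
    norm_num
    rw [← Real.sqrt_eq_rpow, Real.sqrt_div (by positivity), Real.sqrt_sq hε.le]
  rw [mul_pow, mul_pow, inv_pow, h1, Real.sq_sqrt (by positivity), Real.sq_sqrt (by positivity)]
  have : Real.sqrt Real.pi ≠ 0 := by positivity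
  field_simp

lemma cs_normSq (t e ε : ℝ) (hε : 0 < ε) (E : ℝ) :
    fourierTransform (coherentState t e ε) E *
      (starRingEnd ℂ) (fourierTransform (coherentState t e ε) E) =
    (((Real.sqrt Real.pi * ε)⁻¹ * Real.exp (-((E - e) ^ 2 / ε ^ 2)) : ℝ) : ℂ) := by
  rw [Complex.mul_conj, Complex.normSq_eq_norm_sq, cs_fourier t e ε hε, norm_mul,
    Complex.norm_exp_ofReal_mul_I, mul_one, Complex.norm_real, Real.norm_eq_abs, sq_abs, mul_pow,
    cs_const ε hε, ← Real.exp_nat_mul]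
  congr 3
  have := hε.ne'
  push_cast
  field_simp

lemma cs_integrable (t e ε : ℝ) (hε : 0 < ε) : Integrable (coherentState t e ε) := by
  have h := (integrable_cexp_quadratic' (b := (-((ε ^ 2 / 2 : ℝ) : ℂ))) (by
    rw [← ofReal_neg, ofReal_re]; have := pow_pos hε 2; linarith)
    (I * (e - (0 : ℝ)) - ε ^ 2 * t) (I * t * e / 2 - ε ^ 2 * t ^ 2 / 2)).const_mul
    (((ε ^ 2 / Real.pi) ^ ((1 : ℝ) / 4) : ℝ) : ℂ)
  refine h.congr (Filter.Eventually.of_forall fun x => ?_)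
  have := cs_quad t e ε 0 x
  simp only [ofReal_zero, mul_zero, zero_mul, neg_zero, Complex.exp_zero, one_mul] at this
  simp only [ofReal_zero]
  exact this.symm

lemma cs_fourier_integrable (t e ε : ℝ) (hε : 0 < ε) :
    Integrable (fourierTransform (coherentState t e ε)) := by
  have hg : Integrable (fun E : ℝ => Real.exp (-((E - e) ^ 2 / (2 * ε ^ 2)))) := by
    have := (integrable_exp_neg_mul_sq (b := 1 / (2 * ε ^ 2)) (by positivity)).comp_sub_right e
    refine this.congr (Filter.Eventually.of_forall fun x => ?_)
    simp only
    congr 1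
    ring
  rw [show fourierTransform (coherentState t e ε) = _ from funext (cs_fourier t e ε hε)]
  refine (hg.const_mul ((Real.sqrt (2 * Real.pi))⁻¹ * ((ε ^ 2 / Real.pi) ^ ((1 : ℝ) / 4) *
        Real.sqrt (Real.pi / (ε ^ 2 / 2))))).mono (by fun_prop) ?_
  refine Filter.Eventually.of_forall fun E => ?_
  rw [norm_mul, Complex.norm_exp_ofReal_mul_I, mul_one, Complex.norm_real]

/-- **Diagonal coherent-state matrix elements of a Fourier multiplier are Gaussian
averages of its on-shell symbol**: if `S : ℝ → ℂ` is bounded and measurable and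
`A = 𝓕⁻¹ ∘ M_S ∘ 𝓕` is the Fourier multiplier with symbol `S`, then for all `t, e ∈ ℝ`
and `ε > 0`, `⟪ψ_{t,e,ε}, A ψ_{t,e,ε}⟫ = (√π ε)⁻¹ ∫ S(E) e^{-(E-e)²/ε²} dE`. -/
theorem coherentState_multiplier_matrix_element
    (S : ℝ → ℂ) (hSmeas : Measurable S) (hSbdd : ∃ M : ℝ, ∀ E : ℝ, ‖S E‖ ≤ M)
    (t e ε : ℝ) (hε : 0 < ε) :
    ∫ x : ℝ, (starRingEnd ℂ) (coherentState t e ε x) *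
        inverseFourierTransform
          (fun E : ℝ => S E * fourierTransform (coherentState t e ε) E) x
      = (((Real.sqrt Real.pi * ε)⁻¹ : ℝ) : ℂ) *
        ∫ E : ℝ, S E * ((Real.exp (-((E - e) ^ 2 / ε ^ 2)) : ℝ) : ℂ) := by
  obtain ⟨M, hM⟩ := hSbdd
  set ψ := coherentState t e ε with hψ
  set φ := fourierTransform ψ with hφ
  set c : ℂ := (((Real.sqrt (2 * Real.pi))⁻¹ : ℝ) : ℂ) with hc
  have hψi : Integrable ψ := cs_integrable t e ε hε
  have hφi : Integrable φ := cs_fourier_integrable t e ε hε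
  have hSφ : Integrable (fun E => S E * φ E) :=
    hφi.bdd_mul hSmeas.aestronglyMeasurable (Filter.Eventually.of_forall hM)
  have hψc : Integrable (fun x => (starRingEnd ℂ) (ψ x)) :=
    (Complex.conjLIE.toContinuousLinearEquiv.integrable_comp_iff).2 hψi
  have hF : Integrable (fun p : ℝ × ℝ => Complex.exp (I * (p.2 : ℂ) * (p.1 : ℂ)) *
      ((starRingEnd ℂ) (ψ p.1) * (S p.2 * φ p.2))) (volume.prod volume) := by
    refine (hψc.mul_prod hSφ).bdd_mul (c := 1) (by fun_prop)
      (Filter.Eventually.of_forall fun p => ?_)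
    rw [show I * (p.2 : ℂ) * (p.1 : ℂ) = ((p.2 * p.1 : ℝ) : ℂ) * I by push_cast; ring,
      Complex.norm_exp_ofReal_mul_I]
  have hconj : ∀ E, (starRingEnd ℂ) (φ E) =
      c * ∫ x : ℝ, Complex.exp (I * (E : ℂ) * (x : ℂ)) * (starRingEnd ℂ) (ψ x) := by
    intro E
    rw [hφ]
    unfold fourierTransform
    rw [map_mul, Complex.conj_ofReal, ← integral_conj]
    congr 2
    ext x
    rw [map_mul, ← Complex.exp_conj]
    simp
  calc ∫ x : ℝ, (starRingEnd ℂ) (ψ x) * inverseFourierTransform (fun E : ℝ => S E * φ E) x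
      = ∫ x : ℝ, c * ∫ E : ℝ, Complex.exp (I * (E : ℂ) * (x : ℂ)) *
          ((starRingEnd ℂ) (ψ x) * (S E * φ E)) := by
        congr 1
        ext x
        unfold inverseFourierTransform
        rw [mul_left_comm, ← integral_const_mul]
        congr 2
        ext E
        ring
    _ = c * ∫ E : ℝ, ∫ x : ℝ, Complex.exp (I * (E : ℂ) * (x : ℂ)) *
          ((starRingEnd ℂ) (ψ x) * (S E * φ E)) := by
        rw [integral_const_mul, integral_integral_swap hF]
    _ = ∫ E : ℝ, S E * (φ E * (starRingEnd ℂ) (φ E)) := by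
        rw [← integral_const_mul]
        congr 1
        ext E
        rw [hconj, mul_left_comm (φ E), mul_left_comm (S E), ← integral_const_mul,
          ← integral_const_mul, ← integral_const_mul, ← integral_const_mul]
        congr 1
        ext x
        ring
    _ = _ := by
        rw [← integral_const_mul]
        congr 1
        ext E
        rw [cs_normSq t e ε hε E]
        push_cast
        ring
end

section
/- First-order adiabatic error in the soluble model: let v : ℝ → ℝ be measurable with ∫_ℝ |v(u)| du < ∞ and ∫_ℝ |u·v(u)| du < ∞, and let f : ℝ → ℝ be differentiable with bounded derivative. Fix s, x ∈ ℝ. Then, writing S_f(s) = exp(−i f(s) ∫_ℝ v(u) du) for the frozen scattering amplitude, the dynamical amplitude S_d(s,x;ω) = exp(−i ∫_ℝ f(s − ωτ) v(x − τ) dτ) satisfies lim_{ω→0} (1/ω) · (S_d(s,x;ω) − S_f(s)) = i · f'(s) · (∫_ℝ τ · v(x − τ) dτ) · S_f(s). In particular the first-order error depends on the first moment ∫ τ v(x−τ) dτ of the potential, which is not determined by the frozen scattering data f(s)∫v. -/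
open MeasureTheory Complex Filter Topology

/-- **First-order adiabatic error in the soluble model**: for `v` measurable with finite
mass and first moment and `f` differentiable with bounded derivative, the dynamical
amplitude `S_d(s,x;ω) = exp(-i ∫ f(s - ωτ) v(x - τ) dτ)` and the frozen amplitude
`S_f(s) = exp(-i f(s) ∫ v)` satisfy
`lim_{ω→0} ω⁻¹ (S_d(s,x;ω) - S_f(s)) = i f'(s) (∫ τ v(x - τ) dτ) S_f(s)`.
The first-order error depends on the first moment of the potential, which is not
determined by the frozen scattering data. -/
theorem soluble_model_adiabatic_error
    (v : ℝ → ℝ) (hvm : Measurable v)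
    (hvi : Integrable v (volume : Measure ℝ))
    (hvmom : Integrable (fun u : ℝ => u * v u) (volume : Measure ℝ))
    (f f' : ℝ → ℝ) (hf : ∀ y : ℝ, HasDerivAt f (f' y) y)
    (hf'b : ∃ M : ℝ, ∀ y : ℝ, |f' y| ≤ M)
    (s x : ℝ) :
    Tendsto
      (fun ω : ℝ =>
        (ω : ℂ)⁻¹ *
          (Complex.exp (-(Complex.I * ((∫ τ : ℝ, f (s - ω * τ) * v (x - τ) : ℝ) : ℂ))) -
            Complex.exp (-(Complex.I * ((f s * ∫ u : ℝ, v u : ℝ) : ℂ)))))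
      (𝓝[≠] (0 : ℝ))
      (𝓝 (Complex.I * (f' s : ℂ) * ((∫ τ : ℝ, τ * v (x - τ) : ℝ) : ℂ) *
        Complex.exp (-(Complex.I * ((f s * ∫ u : ℝ, v u : ℝ) : ℂ))))) := by
  obtain ⟨M, hM⟩ := hf'b
  have h1 : Integrable (fun τ : ℝ => v (x - τ)) := hvi.comp_sub_left x
  have h2 : Integrable (fun τ : ℝ => τ * v (x - τ)) := by
    have h3 := (h1.const_mul x).sub (hvmom.comp_sub_left x)
    refine h3.congr (Eventually.of_forall fun τ => ?_)
    simp only [Pi.sub_apply]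
    ring
  have hfc : Continuous f := continuous_iff_continuousAt.2 fun y => (hf y).continuousAt
  have hG : HasDerivAt (fun ω : ℝ => ∫ τ : ℝ, f (s - ω * τ) * v (x - τ))
      (∫ τ : ℝ, f' (s - 0 * τ) * (-τ) * v (x - τ)) 0 := by
    refine (hasDerivAt_integral_of_dominated_loc_of_deriv_le
      (F := fun ω τ : ℝ => f (s - ω * τ) * v (x - τ))
      (F' := fun ω τ : ℝ => f' (s - ω * τ) * (-τ) * v (x - τ))
      (bound := fun τ : ℝ => M * |τ * v (x - τ)|)
      (s := Set.univ) Filter.univ_mem ?_ ?_ ?_ ?_ ?_ ?_).2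
    · refine Eventually.of_forall fun ω => ?_
      exact (Continuous.aestronglyMeasurable (by fun_prop)).mul h1.aestronglyMeasurable
    · simpa using h1.const_mul (f s)
    · have h4 := (h2.const_mul (-(f' s))).aestronglyMeasurable
      refine h4.congr (Eventually.of_forall fun τ => ?_)
      simp only [zero_mul, sub_zero]
      ring
    · refine Eventually.of_forall fun τ ω _ => ?_
      rw [Real.norm_eq_abs, mul_assoc, abs_mul, neg_mul, abs_neg]
      exact mul_le_mul_of_nonneg_right (hM _) (abs_nonneg _)
    · exact h2.abs.const_mul M
    · refine Eventually.of_forall fun τ ω _ => ?_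
      have h5 : HasDerivAt (fun ω : ℝ => s - ω * τ) (-τ) ω := by
        simpa using ((hasDerivAt_id ω).mul_const τ).const_sub s
      exact ((hf (s - ω * τ)).comp ω h5).mul_const (v (x - τ))
  have hval : (∫ τ : ℝ, f' (s - 0 * τ) * (-τ) * v (x - τ))
      = -(f' s * ∫ τ : ℝ, τ * v (x - τ)) := by
    rw [← integral_const_mul, ← integral_neg]
    refine integral_congr_ae (Eventually.of_forall fun τ => ?_)
    simp only [zero_mul, sub_zero]
    ring
  have hG0 : (∫ τ : ℝ, f (s - 0 * τ) * v (x - τ)) = f s * ∫ u : ℝ, v u := by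
    simp only [zero_mul, sub_zero]
    rw [integral_const_mul, integral_sub_left_eq_self v volume x]
  rw [hval] at hG
  have hE := ((hG.ofReal_comp.const_mul Complex.I).neg).cexp
  have hT := hasDerivAt_iff_tendsto_slope_zero.1 hE
  simp only [zero_add, Pi.neg_apply, hG0] at hT
  convert hT using 2
  · rw [Complex.real_smul, Complex.ofReal_inv]
  · push_cast
    ring
end
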